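/- Cross-section variant of the comparison theorem: In the setting of the main comparison theorem, let S ⊆ T be a cross section (every leaf v ∈ ∂T has exactly one prefix lying in S), let T^S be the set of all prefixes of elements of S, and set A*_S = sup{H_q(x)/ℓ(x) : x ∈ interior T \ interior T^S} and a*_S = inf{H_q(x)/ℓ(x) : x ∈ interior T \ interior T^S}. Then for every ε > 0 (with witness M_ε) and 0 < δ < 1/2, |H(P)/ℓ(P) − H(Q)/ℓ(Q)| ≤ L·(2ε + M_ε·φ(δ)) + (C·√L/δ)·√(D(P‖Q)/ℓ(P)) + ((A*_S − a*_S)/2)·‖μ_P − μ_Q‖₁ + (A − a)·max{ℓ(P_S)/ℓ(P), ℓ(Q_S)/ℓ(Q)}, where ℓ(P_S) = ∑_{s∈S} |s|_ℓ·P(∂T_s), ℓ(Q_S) = ∑_{s∈S} |s|_ℓ·Q(∂T_s), and L, C, A, a, μ_P, μ_Q are as in the main comparison theorem. -/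

import Mathlib

open scoped BigOperators
open Filter

noncomputable section

/-- The entropy function `φ(t) = t·log₂(1/t)` (which vanishes at `t = 0`). -/
def phi (t : ℝ) : ℝ := t * Real.logb 2 (1 / t)

/-- A rooted tree: a set of finite lists over ℕ containing the empty list (the root)
and closed under taking prefixes. -/
def IsTree (T : Set (List ℕ)) : Prop :=
  ([] : List ℕ) ∈ T ∧ ∀ x ∈ T, ∀ y : List ℕ, y <+: x → y ∈ T

/-- The successors of `x` in `T`: one-entry extensions of `x` lying in `T`. -/
def succs (T : Set (List ℕ)) (x : List ℕ) : Set (List ℕ) :=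
  {y | y ∈ T ∧ ∃ n : ℕ, y = x ++ [n]}

/-- `x` is a leaf of `T`. -/
def IsLeaf (T : Set (List ℕ)) (x : List ℕ) : Prop :=
  x ∈ T ∧ succs T x = ∅

/-- The boundary of `T`: its set of leaves. -/
def bdry (T : Set (List ℕ)) : Set (List ℕ) := {x | IsLeaf T x}

/-- The interior of `T`. -/
def intr (T : Set (List ℕ)) : Set (List ℕ) := T \ bdry T

/-- No vertex has exactly one successor. -/
def NoUnary (T : Set (List ℕ)) : Prop :=
  ∀ x ∈ T, ∀ y : List ℕ, succs T x ≠ {y}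

/-- `T` has no infinite geodesic. -/
def NoInfGeo (T : Set (List ℕ)) : Prop :=
  ¬ ∃ ξ : ℕ → ℕ, ∀ n : ℕ, (List.ofFn fun i : Fin n => ξ i) ∈ T

/-- `∂T_x`: the set of leaves having `x` as a prefix. -/
def cone (T : Set (List ℕ)) (x : List ℕ) : Set (List ℕ) :=
  {v | v ∈ bdry T ∧ x <+: v}

/-- `P(∂T_x)`. -/
def mass (T : Set (List ℕ)) (P : List ℕ → ℝ) (x : List ℕ) : ℝ :=
  ∑' v : cone T x, P v

/-- `|x|_ℓ`: the sum of `ℓ(y)` over the proper prefixes `y` of `x`. -/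
def lenWt (ℓ : List ℕ → ℝ) (x : List ℕ) : ℝ :=
  ∑ i ∈ Finset.range x.length, ℓ (x.take i)

/-- Expected length `ℓ(P)`. -/
def expLen (T : Set (List ℕ)) (ℓ P : List ℕ → ℝ) : ℝ :=
  ∑' v : bdry T, lenWt ℓ v * P v

/-- Forward transition probability `p(y|x) = P(∂T_y)/P(∂T_x)`. -/
def fwd (T : Set (List ℕ)) (P : List ℕ → ℝ) (x y : List ℕ) : ℝ :=
  mass T P y / mass T P x

/-- Node-average measure `μ_P(x) = ℓ(x)·P(∂T_x)/ℓ(P)`. -/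
def nodeAvg (T : Set (List ℕ)) (ℓ P : List ℕ → ℝ) (x : List ℕ) : ℝ :=
  ℓ x * mass T P x / expLen T ℓ P

/-- A (fully supported) probability measure on a set `S` of vertices. -/
def IsProbOn (S : Set (List ℕ)) (P : List ℕ → ℝ) : Prop :=
  (∀ v ∈ S, 0 < P v) ∧ HasSum (fun v : S => P v) 1

/-- The local entropy `H_q(x) = ∑_{y∈N(x)} φ(q(y|x))`. -/
def Hloc (T : Set (List ℕ)) (Q : List ℕ → ℝ) (x : List ℕ) : ℝ :=
  ∑' y : succs T x, phi (fwd T Q x y)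

/-- The subtree `T^S` spanned by a cross section `S`: all prefixes of elements of `S`. -/
def subTreeOf (S : Set (List ℕ)) : Set (List ℕ) :=
  {x | ∃ s ∈ S, x <+: s}

/-!
Three series over the vertices of `T` come from one exchange of summation between leaves and
edges: `ℓ(P) = ∑ ℓ(x) P(∂T_x)`, `H(P) = ∑ P(∂T_x) H_p(x)`, and
`log 2 · D(P‖Q) = ∑ P(∂T_x) D_x`, where `D_x` is the divergence of `p(·|x)` from `q(·|x)` in nats.
For the last one the edge terms `log (p / q)` change sign; adding `q / p - 1`, which contributes
nothing in total, makes them nonnegative.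

Compare both normalized entropies with `∑ P(∂T_x) H_q(x) / ℓ(P)`. At each vertex `H_p - H_q` is
bounded by splitting off the `M` main successors, where `φ` satisfies
`|φ(s) - φ(t)| ≤ φ(δ) + 2|s - t| / (e δ log 2)`, and by Pinsker's inequality; summing over vertices
by Cauchy–Schwarz gives the first two terms. What remains is the integral of `H_q / ℓ` against
`μ_P - μ_Q`. Off the interior of `T^S` it is bounded by the oscillation of `H_q / ℓ` there; the
interior of `T^S` has `μ_P`-measure `ℓ(P_S) / ℓ(P)`, by the leaf-vertex exchange applied to the
restriction of `ℓ` to it.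
-/

section EntropyFunction

open Real

lemma phi_eq_negMulLog_div (t : ℝ) : phi t = negMulLog t / log 2 := by
  rw [phi, logb, one_div, log_inv, negMulLog]
  ring

lemma phi_nonneg {t : ℝ} (h₀ : 0 ≤ t) (h₁ : t ≤ 1) : 0 ≤ phi t := by
  rw [phi_eq_negMulLog_div]
  exact div_nonneg (negMulLog_nonneg h₀ h₁) (log_nonneg one_le_two)

lemma negMulLog_le_tangent {s t : ℝ} (hs : 0 ≤ s) (ht : 0 < t) :
    negMulLog s ≤ s / t * negMulLog t + (t - s) := by
  calc negMulLog s
      = s / t * negMulLog t + t * negMulLog (s / t) := by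
        rw [← negMulLog_mul, mul_div_cancel₀ s ht.ne']
    _ ≤ s / t * negMulLog t + t * (1 - s / t) := by
        gcongr
        exact negMulLog_le_one_sub_self (by positivity)
    _ = s / t * negMulLog t + (t - s) := by field_simp

lemma negMulLog_le_exp_neg_one {t : ℝ} (ht : 0 ≤ t) : negMulLog t ≤ exp (-1) := by
  refine (negMulLog_le_tangent ht (exp_pos (-1))).trans_eq ?_
  rw [negMulLog, log_exp]
  field_simp
  ring

lemma negMulLog_sub_le_sub {s t : ℝ} (hs : 0 ≤ s) (hst : s ≤ t) (ht : t ≤ 1) :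
    negMulLog s - negMulLog t ≤ t - s := by
  obtain rfl | ht₀ := (hs.trans hst).eq_or_lt
  · rw [le_antisymm hst hs]
    simp
  have hle : s / t * negMulLog t ≤ negMulLog t :=
    mul_le_of_le_one_left (negMulLog_nonneg ht₀.le ht) (div_le_one_of_le₀ hst ht₀.le)
  linarith [negMulLog_le_tangent hs ht₀]

lemma negMulLog_add_le {s t : ℝ} (hs : 0 ≤ s) (ht : 0 ≤ t) :
    negMulLog (s + t) ≤ negMulLog s + negMulLog t := by
  obtain rfl | hs := hs.eq_or_lt
  · simp
  obtain rfl | ht := ht.eq_or_lt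
  · simp
  have hlog_s : s * log s ≤ s * log (s + t) := by gcongr; linarith
  have hlog_t : t * log t ≤ t * log (s + t) := by gcongr; linarith
  simp only [negMulLog]
  linarith

lemma monotoneOn_negMulLog : MonotoneOn negMulLog (Set.Icc 0 (exp (-1))) := by
  rintro s ⟨hs, -⟩ t ⟨-, ht⟩ hst
  obtain rfl | ht₀ := (hs.trans hst).eq_or_lt
  · rw [le_antisymm hst hs]
  have hlog : log t ≤ -1 := (log_le_iff_le_exp ht₀).2 ht
  have hself : t ≤ negMulLog t := by
    rw [negMulLog]
    nlinarith
  have hratio : s / t ≤ 1 := div_le_one_of_le₀ hst ht₀.le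
  calc negMulLog s ≤ s / t * negMulLog t + (t - s) := negMulLog_le_tangent hs ht₀
    _ = s / t * negMulLog t + (1 - s / t) * t := by field_simp
    _ ≤ s / t * negMulLog t + (1 - s / t) * negMulLog t := by
        gcongr
    _ = negMulLog t := by ring

lemma one_div_four_le_exp_neg_one : 1 / 4 ≤ exp (-1) := by
  rw [exp_neg, ← one_div]
  gcongr
  linarith [exp_one_lt_d9]

lemma negMulLog_le_of_le_half {r δ : ℝ} (hr : 0 ≤ r) (hrδ : r ≤ δ / 2) (hδ₀ : 0 < δ)
    (hδ : δ ≤ 1 / 2) : negMulLog r ≤ negMulLog δ := by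
  have hmono : negMulLog r ≤ negMulLog (δ / 2) :=
    have hquarter : δ / 2 ≤ exp (-1) := le_trans (by linarith) one_div_four_le_exp_neg_one
    monotoneOn_negMulLog ⟨hr, hrδ.trans hquarter⟩ ⟨by positivity, hquarter⟩ hrδ
  have hlog : log δ ≤ -log 2 := by
    rw [← log_inv]
    exact log_le_log hδ₀ (by linarith)
  have hhalf : negMulLog (δ / 2) ≤ negMulLog δ := by
    rw [negMulLog, negMulLog, log_div hδ₀.ne' two_ne_zero]
    nlinarith
  exact hmono.trans hhalf

lemma abs_negMulLog_sub_le {s t δ : ℝ} (hs : s ∈ Set.Icc 0 1) (ht : t ∈ Set.Icc 0 1)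
    (hδ₀ : 0 < δ) (hδ : δ ≤ 1 / 2) :
    |negMulLog s - negMulLog t| ≤ negMulLog δ + 2 / (exp 1 * δ) * |s - t| := by
  wlog hst : s ≤ t generalizing s t
  · rw [abs_sub_comm, abs_sub_comm s]
    exact this ht hs (le_of_not_ge hst)
  have hfδ : 0 ≤ negMulLog δ := negMulLog_nonneg hδ₀.le (by linarith)
  rw [abs_sub_comm s, abs_of_nonneg (sub_nonneg.2 hst)]
  obtain hfar | hnear := le_total (δ / 2) (t - s)
  · have hbound : exp (-1) ≤ 2 / (exp 1 * δ) * (t - s) := by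
      calc exp (-1) = 2 / (exp 1 * δ) * (δ / 2) := by rw [exp_neg]; field_simp
        _ ≤ 2 / (exp 1 * δ) * (t - s) := by gcongr
    have hdiff : |negMulLog s - negMulLog t| ≤ exp (-1) :=
      abs_sub_le_of_nonneg_of_le (negMulLog_nonneg hs.1 hs.2) (negMulLog_le_exp_neg_one hs.1)
        (negMulLog_nonneg ht.1 ht.2) (negMulLog_le_exp_neg_one ht.1)
    linarith
  · have hslope : t - s ≤ 2 / (exp 1 * δ) * (t - s) := by
      refine le_mul_of_one_le_left (sub_nonneg.2 hst) ((one_le_div (by positivity)).2 ?_)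
      nlinarith [exp_one_lt_d9]
    have hadd : negMulLog t ≤ negMulLog s + negMulLog (t - s) := by
      simpa using negMulLog_add_le hs.1 (sub_nonneg.2 hst)
    rw [abs_le]
    constructor <;>
      linarith [negMulLog_sub_le_sub hs.1 hst ht.2,
        negMulLog_le_of_le_half (sub_nonneg.2 hst) hnear hδ₀ hδ]

lemma abs_phi_sub_le {s t δ : ℝ} (hs : s ∈ Set.Icc 0 1) (ht : t ∈ Set.Icc 0 1)
    (hδ₀ : 0 < δ) (hδ : δ ≤ 1 / 2) :
    |phi s - phi t| ≤ phi δ + 2 / (exp 1 * log 2 * δ) * |s - t| := by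
  have hlog : 0 < log 2 := log_pos one_lt_two
  simp only [phi_eq_negMulLog_div, ← sub_div, abs_div, abs_of_pos hlog]
  rw [div_le_iff₀ hlog]
  refine (abs_negMulLog_sub_le hs ht hδ₀ hδ).trans_eq ?_
  field_simp

end EntropyFunction

section Pinsker

open Real InformationTheory

lemma two_mul_sub_one_le_mul_log {x : ℝ} (hx : 1 ≤ x) : 2 * (x - 1) ≤ (x + 1) * log x := by
  have h := le_log_one_add_of_nonneg (sub_nonneg.2 hx)
  rw [add_sub_cancel, div_le_iff₀ (by linarith)] at h
  linarith

lemma mul_log_le_two_mul_sub_one {x : ℝ} (hx₀ : 0 < x) (hx : x ≤ 1) :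
    (x + 1) * log x ≤ 2 * (x - 1) := by
  have h := two_mul_sub_one_le_mul_log ((one_le_inv₀ hx₀).2 hx)
  rw [log_inv] at h
  have h' := mul_le_mul_of_nonneg_left h hx₀.le
  field_simp at h'
  linarith

-- The pointwise inequality behind Pinsker's: take `u = p / q` and apply Cauchy–Schwarz.
lemma three_mul_sq_sub_one_le_klFun {u : ℝ} (hu : 0 < u) :
    3 * (u - 1) ^ 2 ≤ (2 * u + 4) * klFun u := by
  let g : ℝ → ℝ := fun x ↦ (2 * x + 4) * klFun x - 3 * (x - 1) ^ 2
  have hderiv : ∀ x, 0 < x → HasDerivAt g (4 * ((x + 1) * log x - 2 * (x - 1))) x := by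
    intro x hx
    have hlin : HasDerivAt (fun x : ℝ ↦ 2 * x + 4) 2 x := by
      simpa using ((hasDerivAt_id x).const_mul 2).add_const 4
    have hsq : HasDerivAt (fun x : ℝ ↦ 3 * (x - 1) ^ 2) (6 * (x - 1)) x := by
      refine ((((hasDerivAt_id x).sub_const 1).pow 2).const_mul 3).congr_deriv ?_
      simp only [id_eq, Nat.cast_ofNat, Nat.add_one_sub_one, pow_one]
      ring
    refine ((hlin.mul (hasDerivAt_klFun hx.ne')).sub hsq).congr_deriv ?_
    rw [klFun_apply]
    ring
  have hcont : ContinuousOn g (Set.Ioi 0) := fun x hx ↦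
    (hderiv x hx).continuousAt.continuousWithinAt
  have hg_one : g 1 = 0 := by simp [g, klFun_one]
  suffices 0 ≤ g u from sub_nonneg.1 this
  rw [← hg_one]
  obtain h | h := le_total 1 u
  · refine monotoneOn_of_hasDerivWithinAt_nonneg (f := g) (convex_Ici 1)
      (hcont.mono fun _ hx ↦ Set.mem_Ioi.2 (one_pos.trans_le hx))
      (fun x hx ↦ (hderiv x ?_).hasDerivWithinAt) (fun x hx ↦ ?_) Set.self_mem_Ici h h
    all_goals rw [interior_Ici, Set.mem_Ioi] at hx
    · exact one_pos.trans hx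
    · linarith [two_mul_sub_one_le_mul_log hx.le]
  · refine antitoneOn_of_hasDerivWithinAt_nonpos (f := g) (convex_Ioc 0 1)
      (hcont.mono fun _ hx ↦ hx.1)
      (fun x hx ↦ (hderiv x ?_).hasDerivWithinAt) (fun x hx ↦ ?_) ⟨hu, h⟩
      (Set.right_mem_Ioc.2 one_pos) h
    all_goals rw [interior_Ioc, Set.mem_Ioo] at hx
    · exact hx.1
    · linarith [mul_log_le_two_mul_sub_one hx.1 hx.2.le]

lemma sq_sub_le_mul_klFun_div {p q : ℝ} (hp : 0 < p) (hq : 0 < q) :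
    (p - q) ^ 2 ≤ (2 * p + 4 * q) / 3 * (q * klFun (p / q)) := by
  calc (p - q) ^ 2 = q ^ 2 / 3 * (3 * (p / q - 1) ^ 2) := by field_simp
    _ ≤ q ^ 2 / 3 * ((2 * (p / q) + 4) * klFun (p / q)) := by
        gcongr ?_ * ?_
        exact three_mul_sq_sub_one_le_klFun (div_pos hp hq)
    _ = (2 * p + 4 * q) / 3 * (q * klFun (p / q)) := by field_simp

end Pinsker

section Series

lemma hasSum_of_hasSum_swap {α β : Type*} {f : α → β → ℝ} (hf : ∀ a b, 0 ≤ f a b)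
    {r : α → ℝ} {c : β → ℝ} (hr : ∀ a, HasSum (f a) (r a))
    (hc : ∀ b, HasSum (fun a ↦ f a b) (c b)) {s : ℝ} (hs : HasSum r s) : HasSum c s := by
  have hsum : Summable (Function.uncurry f) :=
    (summable_prod_of_nonneg fun _ ↦ hf _ _).2
      ⟨fun a ↦ (hr a).summable, hs.summable.congr fun a ↦ (hr a).tsum_eq.symm⟩
  have hrow : ∑' x, Function.uncurry f x = s := (hsum.hasSum.prod_fiberwise hr).unique hs
  have hswap : HasSum (fun x : β × α ↦ f x.2 x.1) s :=
    (Equiv.prodComm β α).hasSum_iff (f := Function.uncurry f) |>.2 (hrow ▸ hsum.hasSum)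
  exact hswap.prod_fiberwise hc

lemma hasSum_comm_of_nonneg {α β : Type*} {f : α → β → ℝ} (hf : ∀ a b, 0 ≤ f a b)
    {r : α → ℝ} {c : β → ℝ} (hr : ∀ a, HasSum (f a) (r a))
    (hc : ∀ b, HasSum (fun a ↦ f a b) (c b)) {s : ℝ} : HasSum r s ↔ HasSum c s :=
  ⟨hasSum_of_hasSum_swap hf hr hc, hasSum_of_hasSum_swap (fun b a ↦ hf a b) hc hr⟩

variable {ι : Type*}

lemma exists_hasSum_mul_sqrt_le {n g : ι → ℝ} {N Γ : ℝ} (hn : ∀ i, 0 ≤ n i) (hg : ∀ i, 0 ≤ g i)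
    (hN : HasSum n N) (hΓ : HasSum (fun i ↦ n i * g i) Γ) :
    ∃ s ≤ √(N * Γ), HasSum (fun i ↦ n i * √(g i)) s := by
  have hng : ∀ i, 0 ≤ n i * g i := fun i ↦ mul_nonneg (hn i) (hg i)
  have hsplit : ∀ i, n i * √(g i) = √(n i) * √(n i * g i) := fun i ↦ by
    rw [Real.sqrt_mul (hn i), ← mul_assoc, Real.mul_self_sqrt (hn i)]
  have hfin : ∀ F : Finset ι, ∑ i ∈ F, n i * √(g i) ≤ √(N * Γ) := fun F ↦ by
    calc ∑ i ∈ F, n i * √(g i) = ∑ i ∈ F, √(n i) * √(n i * g i) := by simp only [hsplit]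
      _ ≤ √(∑ i ∈ F, n i) * √(∑ i ∈ F, n i * g i) := Real.sum_sqrt_mul_sqrt_le _ hn hng
      _ ≤ √N * √Γ := by
          gcongr
          · exact sum_le_hasSum F (fun i _ ↦ hn i) hN
          · exact sum_le_hasSum F (fun i _ ↦ hng i) hΓ
      _ = √(N * Γ) := (Real.sqrt_mul (hN.nonneg hn) Γ).symm
  have hnonneg : ∀ i, 0 ≤ n i * √(g i) := fun i ↦ mul_nonneg (hn i) (Real.sqrt_nonneg _)
  have hsum := summable_of_sum_le hnonneg hfin
  exact ⟨_, Real.tsum_le_of_sum_le hnonneg hfin, hsum.hasSum⟩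

lemma exists_hasSum_mul_abs_le {n g d : ι → ℝ} {N Γ c K : ℝ} (hn : ∀ i, 0 ≤ n i)
    (hg : ∀ i, 0 ≤ g i) (hN : HasSum n N) (hΓ : HasSum (fun i ↦ n i * g i) Γ) (hK : 0 ≤ K)
    (hd : ∀ i, |d i| ≤ c + K * √(g i)) :
    ∃ s, |s| ≤ c * N + K * √(N * Γ) ∧ HasSum (fun i ↦ n i * d i) s := by
  obtain ⟨t, ht, htsum⟩ := exists_hasSum_mul_sqrt_le hn hg hN hΓ
  have hmaj : HasSum (fun i ↦ c * n i + K * (n i * √(g i))) (c * N + K * t) :=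
    (hN.mul_left c).add (htsum.mul_left K)
  have hle : ∀ i, ‖n i * d i‖ ≤ c * n i + K * (n i * √(g i)) := fun i ↦ by
    rw [Real.norm_eq_abs, abs_mul, abs_of_nonneg (hn i)]
    linarith [mul_le_mul_of_nonneg_left (hd i) (hn i)]
  refine ⟨∑' i, n i * d i, ?_, (hmaj.summable.of_norm_bounded hle).hasSum⟩
  calc |∑' i, n i * d i| ≤ c * N + K * t := tsum_of_norm_bounded hmaj hle
    _ ≤ c * N + K * √(N * Γ) := by gcongr

-- After subtracting the midpoint `(A' + a') / 2` from `h`, which is harmless since `μ` and `ν` have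
-- the same total mass, `h` is at most `(A' - a') / 2` in absolute value off `U`.
lemma hasSum_mul_sub_le_half_oscillation {μ ν h : ι → ℝ} {U : Set ι} {m X Y α β a A a' A' : ℝ}
    (hμ₀ : ∀ i, 0 ≤ μ i) (hν₀ : ∀ i, 0 ≤ ν i) (hμ : HasSum μ m) (hν : HasSum ν m)
    (hα : HasSum (U.indicator μ) α) (hβ : HasSum (U.indicator ν) β)
    (hX : HasSum (fun i ↦ μ i * h i) X) (hY : HasSum (fun i ↦ ν i * h i) Y)
    (hh : ∀ i, h i ∈ Set.Icc a A) (hh' : ∀ i ∉ U, h i ∈ Set.Icc a' A')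
    (ha : a ≤ a') (ha' : a' ≤ A') (hA : A' ≤ A) :
    X - Y ≤ (A' - a') / 2 * ∑' i, |μ i - ν i| + (A - a) * max α β := by
  set c := (A' + a') / 2
  have hac : a ≤ c := by simp only [c]; linarith
  have hcA : c ≤ A := by simp only [c]; linarith
  have hcentred : HasSum (fun i ↦ (μ i - ν i) * (h i - c)) (X - Y) := by
    simpa only [← sub_mul, ← mul_sub, sub_self, zero_mul, sub_zero]
      using (hX.sub hY).sub ((hμ.sub hν).mul_right c)
  have hmaj : HasSum (fun i ↦ (A' - a') / 2 * |μ i - ν i|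
        + ((A - c) * U.indicator μ i + (c - a) * U.indicator ν i))
      ((A' - a') / 2 * ∑' i, |μ i - ν i| + ((A - c) * α + (c - a) * β)) :=
    ((hμ.sub hν).summable.abs.hasSum.mul_left _).add ((hα.mul_left _).add (hβ.mul_left _))
  have hterm : ∀ i, (μ i - ν i) * (h i - c) ≤ (A' - a') / 2 * |μ i - ν i|
        + ((A - c) * U.indicator μ i + (c - a) * U.indicator ν i) := by
    intro i
    by_cases hi : i ∈ U
    · have habs : 0 ≤ (A' - a') / 2 * |μ i - ν i| := mul_nonneg (by linarith) (abs_nonneg _)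
      have hμi := mul_le_mul_of_nonneg_left (hh i).2 (hμ₀ i)
      have hνi := mul_le_mul_of_nonneg_left (hh i).1 (hν₀ i)
      rw [Set.indicator_of_mem hi, Set.indicator_of_mem hi]
      linarith
    · have hdist : |h i - c| ≤ (A' - a') / 2 := by
        rw [abs_le]
        constructor <;> simp only [c] <;> linarith [(hh' i hi).1, (hh' i hi).2]
      rw [Set.indicator_of_notMem hi, Set.indicator_of_notMem hi, mul_zero, mul_zero, add_zero,
        add_zero]
      calc (μ i - ν i) * (h i - c) ≤ |h i - c| * |μ i - ν i| := by
            rw [← abs_mul, mul_comm]; exact le_abs_self _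
        _ ≤ (A' - a') / 2 * |μ i - ν i| := by gcongr
  calc X - Y ≤ (A' - a') / 2 * ∑' i, |μ i - ν i| + ((A - c) * α + (c - a) * β) :=
        hasSum_le hterm hcentred hmaj
    _ ≤ (A' - a') / 2 * ∑' i, |μ i - ν i| + ((A - c) * max α β + (c - a) * max α β) := by
        have := sub_nonneg.2 hac
        have := sub_nonneg.2 hcA
        gcongr
        · exact le_max_left α β
        · exact le_max_right α β
    _ = _ := by ring

lemma abs_hasSum_mul_sub_le_half_oscillation {μ ν h : ι → ℝ} {U : Set ι}
    {m X Y α β a A a' A' : ℝ}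
    (hμ₀ : ∀ i, 0 ≤ μ i) (hν₀ : ∀ i, 0 ≤ ν i) (hμ : HasSum μ m) (hν : HasSum ν m)
    (hα : HasSum (U.indicator μ) α) (hβ : HasSum (U.indicator ν) β)
    (hX : HasSum (fun i ↦ μ i * h i) X) (hY : HasSum (fun i ↦ ν i * h i) Y)
    (hh : ∀ i, h i ∈ Set.Icc a A) (hh' : ∀ i ∉ U, h i ∈ Set.Icc a' A')
    (ha : a ≤ a') (ha' : a' ≤ A') (hA : A' ≤ A) :
    |X - Y| ≤ (A' - a') / 2 * ∑' i, |μ i - ν i| + (A - a) * max α β := by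
  refine abs_sub_le_iff.2
    ⟨hasSum_mul_sub_le_half_oscillation hμ₀ hν₀ hμ hν hα hβ hX hY hh hh' ha ha' hA, ?_⟩
  rw [max_comm]
  simp only [abs_sub_comm (μ _)]
  exact hasSum_mul_sub_le_half_oscillation hν₀ hμ₀ hν hμ hβ hα hY hX hh hh' ha ha' hA

end Series

section CountableDistribution

open InformationTheory

variable {α : Type*} {N : Set α} {F : Finset α}

lemma sum_le_hasSum_subtype {g : α → ℝ} {s : ℝ} (hF : ↑F ⊆ N) (hg : ∀ y ∈ N, 0 ≤ g y)
    (hs : HasSum (fun y : N ↦ g y) s) : ∑ y ∈ F, g y ≤ s := by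
  calc ∑ y ∈ F, g y = ∑ y ∈ F, N.indicator g y :=
        Finset.sum_congr rfl fun y hy ↦ (Set.indicator_of_mem (hF hy) g).symm
    _ ≤ s := sum_le_hasSum F (fun y _ ↦ Set.indicator_nonneg hg y)
        ((hasSum_subtype_iff_indicator (f := g)).1 hs)

lemma tsum_subtype_eq_sum_add_tsum_notMem {g : α → ℝ} (hF : ↑F ⊆ N)
    (hg : Summable fun y : {y // y ∈ N ∧ y ∉ F} ↦ g y) :
    ∑' y : N, g y = ∑ y ∈ F, g y + ∑' y : {y // y ∈ N ∧ y ∉ F}, g y := by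
  have hunion : (F : Set α) ∪ {y | y ∈ N ∧ y ∉ F} = N := by
    ext y
    exact ⟨fun h ↦ h.elim (@hF y) And.left, fun h ↦ (em (y ∈ F)).imp id fun hy ↦ ⟨h, hy⟩⟩
  have hdisj : Disjoint (F : Set α) {y | y ∈ N ∧ y ∉ F} :=
    Set.disjoint_left.2 fun _ hy hy' ↦ hy'.2 hy
  have h := (F.hasSum g).add_disjoint hdisj hg.hasSum
  rw [hunion] at h
  exact h.tsum_eq

variable {p q : α → ℝ} {d : ℝ}

lemma sum_abs_sub_le_sqrt_klFun (hF : ↑F ⊆ N) (hp₀ : ∀ y ∈ N, 0 < p y) (hq₀ : ∀ y ∈ N, 0 < q y)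
    (hp : HasSum (fun y : N ↦ p y) 1) (hq : HasSum (fun y : N ↦ q y) 1)
    (hd : HasSum (fun y : N ↦ q y * klFun (p y / q y)) d) :
    ∑ y ∈ F, |p y - q y| ≤ √2 * √d := by
  have hkl : ∀ y ∈ N, 0 ≤ q y * klFun (p y / q y) := fun y hy ↦
    mul_nonneg (hq₀ y hy).le (klFun_nonneg (div_pos (hp₀ y hy) (hq₀ y hy)).le)
  have hw : ∀ y ∈ N, 0 ≤ (2 * p y + 4 * q y) / 3 := fun y hy ↦ by
    linarith [hp₀ y hy, hq₀ y hy]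
  have hw_sum : HasSum (fun y : N ↦ (2 * p y + 4 * q y) / 3) 2 := by
    have h := ((hp.mul_left 2).add (hq.mul_left 4)).div_const 3
    rwa [show ((2 : ℝ) * 1 + 4 * 1) / 3 = 2 by norm_num] at h
  rw [← Real.sqrt_mul zero_le_two]
  refine Real.le_sqrt_of_sq_le ?_
  calc (∑ y ∈ F, |p y - q y|) ^ 2
      ≤ (∑ y ∈ F, (2 * p y + 4 * q y) / 3) * ∑ y ∈ F, q y * klFun (p y / q y) :=
        F.sum_sq_le_sum_mul_sum_of_sq_le_mul (fun y hy ↦ hw y (hF hy)) (fun y hy ↦ hkl y (hF hy))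
          fun y hy ↦ (sq_abs _).trans_le
            (sq_sub_le_mul_klFun_div (hp₀ y (hF hy)) (hq₀ y (hF hy)))
    _ ≤ 2 * d :=
        mul_le_mul (sum_le_hasSum_subtype hF hw hw_sum)
          (sum_le_hasSum_subtype hF hkl hd)
          (Finset.sum_nonneg fun y hy ↦ hkl y (hF hy)) zero_le_two

lemma abs_sum_phi_sub_le {δ : ℝ} (hp : ∀ y ∈ F, p y ∈ Set.Icc 0 1)
    (hq : ∀ y ∈ F, q y ∈ Set.Icc 0 1) (hδ₀ : 0 < δ) (hδ : δ ≤ 1 / 2) :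
    |∑ y ∈ F, phi (p y) - ∑ y ∈ F, phi (q y)| ≤
      F.card * phi δ + 2 / (Real.exp 1 * Real.log 2 * δ) * ∑ y ∈ F, |p y - q y| := by
  rw [← Finset.sum_sub_distrib]
  calc |∑ y ∈ F, (phi (p y) - phi (q y))|
      ≤ ∑ y ∈ F, |phi (p y) - phi (q y)| := Finset.abs_sum_le_sum_abs _ _
    _ ≤ ∑ y ∈ F, (phi δ + 2 / (Real.exp 1 * Real.log 2 * δ) * |p y - q y|) :=
        Finset.sum_le_sum fun y hy ↦ abs_phi_sub_le (hp y hy) (hq y hy) hδ₀ hδ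
    _ = F.card * phi δ + 2 / (Real.exp 1 * Real.log 2 * δ) * ∑ y ∈ F, |p y - q y| := by
        rw [Finset.sum_add_distrib, ← Finset.mul_sum, Finset.sum_const, nsmul_eq_mul]

lemma abs_tsum_phi_sub_le {ε δ : ℝ} {M : ℕ} (hF : ↑F ⊆ N) (hFM : F.card ≤ M)
    (hp₀ : ∀ y ∈ N, 0 < p y) (hq₀ : ∀ y ∈ N, 0 < q y)
    (hp : HasSum (fun y : N ↦ p y) 1) (hq : HasSum (fun y : N ↦ q y) 1)
    (hd : HasSum (fun y : N ↦ q y * klFun (p y / q y)) d)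
    (hpF : Summable fun y : {y // y ∈ N ∧ y ∉ F} ↦ phi (p y))
    (hpε : ∑' y : {y // y ∈ N ∧ y ∉ F}, phi (p y) ≤ ε)
    (hqF : Summable fun y : {y // y ∈ N ∧ y ∉ F} ↦ phi (q y))
    (hqε : ∑' y : {y // y ∈ N ∧ y ∉ F}, phi (q y) ≤ ε) (hδ₀ : 0 < δ) (hδ : δ ≤ 1 / 2) :
    |∑' y : N, phi (p y) - ∑' y : N, phi (q y)| ≤
      2 * ε + M * phi δ + 2 / (Real.exp 1 * Real.log 2 * δ) * √2 * √d := by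
  have mem_Icc : ∀ r : α → ℝ, (∀ y ∈ N, 0 < r y) → HasSum (fun y : N ↦ r y) 1 →
      ∀ y ∈ N, r y ∈ Set.Icc 0 1 := fun r hr₀ hr y hy ↦
    ⟨(hr₀ y hy).le, le_hasSum hr ⟨y, hy⟩ fun z _ ↦ (hr₀ z z.2).le⟩
  have hpI := mem_Icc p hp₀ hp
  have hqI := mem_Icc q hq₀ hq
  have htail_p : 0 ≤ ∑' y : {y // y ∈ N ∧ y ∉ F}, phi (p y) :=
    tsum_nonneg fun y ↦ phi_nonneg (hpI y y.2.1).1 (hpI y y.2.1).2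
  have htail_q : 0 ≤ ∑' y : {y // y ∈ N ∧ y ∉ F}, phi (q y) :=
    tsum_nonneg fun y ↦ phi_nonneg (hqI y y.2.1).1 (hqI y y.2.1).2
  have hhead : |∑ y ∈ F, phi (p y) - ∑ y ∈ F, phi (q y)| ≤
      M * phi δ + 2 / (Real.exp 1 * Real.log 2 * δ) * (√2 * √d) := by
    have hφ : 0 ≤ phi δ := phi_nonneg hδ₀.le (by linarith)
    refine (abs_sum_phi_sub_le (fun y hy ↦ hpI y (hF hy)) (fun y hy ↦ hqI y (hF hy))
      hδ₀ hδ).trans ?_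
    gcongr
    exact sum_abs_sub_le_sqrt_klFun hF hp₀ hq₀ hp hq hd
  rw [tsum_subtype_eq_sum_add_tsum_notMem (g := fun y ↦ phi (p y)) hF hpF,
    tsum_subtype_eq_sum_add_tsum_notMem (g := fun y ↦ phi (q y)) hF hqF, add_sub_add_comm]
  refine (abs_add_le _ _).trans ?_
  linarith [htail_p.trans hpε, abs_sub_le_of_nonneg_of_le htail_p hpε htail_q hqε]

end CountableDistribution

section TreeStructure

variable {T : Set (List ℕ)} {x y v w : List ℕ}

/-- Every vertex of `T` lies below a leaf. This is how the absence of infinite geodesics is used. -/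
def LeafDense (T : Set (List ℕ)) : Prop := ∀ x ∈ T, (cone T x).Nonempty

lemma exists_forall_ofFn_prefix {s : ℕ → List ℕ} (hs : ∀ n, s n <+: s (n + 1))
    (hlen : ∀ n, n ≤ (s n).length) :
    ∃ ξ : ℕ → ℕ, ∀ n, (List.ofFn fun i : Fin n ↦ ξ i) <+: s n := by
  have hmono : ∀ {m n}, m ≤ n → s m <+: s n := fun h ↦
    Nat.le_induction (List.prefix_refl _) (fun n _ ih ↦ ih.trans (hs n)) _ h
  refine ⟨fun k ↦ (s (k + 1))[k]'(hlen (k + 1)), fun n ↦ ?_⟩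
  rw [List.prefix_iff_eq_take]
  refine List.ext_getElem (by simpa using hlen n) fun i hi _ ↦ ?_
  rw [List.length_ofFn] at hi
  rw [List.getElem_ofFn, List.getElem_take]
  exact (hmono hi).getElem _

lemma NoInfGeo.leafDense (hG : NoInfGeo T) (hT : IsTree T) : LeafDense T := by
  intro x hx
  by_contra hleafless
  have hstep : ∀ y : {y // y ∈ T ∧ x <+: y}, ∃ z : {y // y ∈ T ∧ x <+: y}, ∃ k,
      (z : List ℕ) = (y : List ℕ) ++ [k] := by
    rintro ⟨y, hy, hxy⟩
    have hsucc : (succs T y).Nonempty :=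
      Set.nonempty_iff_ne_empty.2 fun h ↦ hleafless ⟨y, ⟨hy, h⟩, hxy⟩
    obtain ⟨_, hz, k, rfl⟩ := hsucc
    exact ⟨⟨y ++ [k], hz, hxy.trans (List.prefix_append y [k])⟩, k, rfl⟩
  choose next k hnext using hstep
  let s : ℕ → {y // y ∈ T ∧ x <+: y} := fun n ↦ next^[n] ⟨x, hx, List.prefix_refl x⟩
  have hs : ∀ n, (s (n + 1) : List ℕ) = s n ++ [k (s n)] := fun n ↦ by
    simp only [s, Function.iterate_succ_apply', hnext]
  have hlen : ∀ n, n ≤ (s n : List ℕ).length := by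
    intro n
    induction n with
    | zero => exact Nat.zero_le _
    | succ n ih => simpa only [hs, List.length_append, List.length_singleton] using by omega
  obtain ⟨ξ, hξ⟩ := exists_forall_ofFn_prefix (s := fun n ↦ s n)
    (fun n ↦ hs n ▸ List.prefix_append _ _) hlen
  exact hG ⟨ξ, fun n ↦ hT.2 _ (s n).2.1 _ (hξ n)⟩

lemma mem_intr_of_mem_succs (hT : IsTree T) (hy : y ∈ succs T x) : x ∈ intr T := by
  obtain ⟨hyT, n, rfl⟩ := id hy
  exact ⟨hT.2 _ hyT _ (List.prefix_append x [n]), fun hleaf ↦ Set.notMem_empty _ (hleaf.2 ▸ hy)⟩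

lemma prefix_of_mem_succs (hy : y ∈ succs T x) : x <+: y := by
  obtain ⟨_, n, rfl⟩ := hy
  exact List.prefix_append x [n]

lemma length_of_mem_succs (hy : y ∈ succs T x) : y.length = x.length + 1 := by
  obtain ⟨_, n, rfl⟩ := hy
  exact List.length_append

lemma take_succ_mem_succs (hT : IsTree T) (hv : v ∈ T) {i : ℕ} (hi : i < v.length) :
    v.take (i + 1) ∈ succs T (v.take i) :=
  ⟨hT.2 v hv _ (List.take_prefix _ _), v[i], (List.take_concat_get' v i hi).symm⟩

lemma take_mem_intr (hT : IsTree T) (hv : v ∈ T) {i : ℕ} (hi : i < v.length) :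
    v.take i ∈ intr T :=
  mem_intr_of_mem_succs hT (take_succ_mem_succs hT hv hi)

lemma mem_intr_of_prefix_of_ne (hT : IsTree T) (hv : v ∈ T) (hxv : x <+: v) (hne : x ≠ v) :
    x ∈ intr T := by
  rw [List.prefix_iff_eq_take.1 hxv]
  refine take_mem_intr hT hv (hxv.length_le.lt_of_ne fun hlen ↦ hne (hxv.eq_of_length hlen))

lemma eq_of_prefix_of_mem_bdry (hT : IsTree T) (hv : v ∈ bdry T) (hw : w ∈ T) (hvw : v <+: w) :
    v = w := by
  by_contra hne
  exact (mem_intr_of_prefix_of_ne hT hw hvw hne).2 hv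

lemma length_lt_of_mem_intr_of_prefix (hx : x ∈ intr T) (hv : v ∈ bdry T) (hxv : x <+: v) :
    x.length < v.length :=
  hxv.length_le.lt_of_ne fun hlen ↦ hx.2 (hxv.eq_of_length hlen ▸ hv)

end TreeStructure

section Mass

variable {T : Set (List ℕ)} {P : List ℕ → ℝ} {x y v : List ℕ}

lemma hasSum_indicator_cone (hP : IsProbOn (bdry T) P) (x : List ℕ) :
    HasSum (fun v : bdry T ↦ (cone T x).indicator P v) (mass T P x) := by
  have hsub : cone T x ⊆ bdry T := fun _ ↦ And.left
  have hsum : Summable fun v : cone T x ↦ P v :=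
    hP.2.summable.comp_injective (Set.inclusion_injective hsub)
  have h := (hasSum_subtype_iff_indicator (f := P)).1 hsum.hasSum
  refine (hasSum_subtype_iff_indicator (f := (cone T x).indicator P)).2 ?_
  rwa [Set.indicator_indicator, Set.inter_eq_right.2 hsub]

lemma indicator_cone_nonneg (hP : IsProbOn (bdry T) P) (x v : List ℕ) :
    0 ≤ (cone T x).indicator P v :=
  Set.indicator_nonneg (fun w hw ↦ (hP.1 w hw.1).le) v

lemma mass_nonneg (hP : IsProbOn (bdry T) P) (x : List ℕ) : 0 ≤ mass T P x :=
  tsum_nonneg fun v ↦ (hP.1 v v.2.1).le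

lemma mass_pos (hL : LeafDense T) (hP : IsProbOn (bdry T) P) (hx : x ∈ T) : 0 < mass T P x := by
  obtain ⟨v, hv⟩ := hL x hx
  calc 0 < P v := hP.1 v hv.1
    _ = (cone T x).indicator P v := (Set.indicator_of_mem hv P).symm
    _ ≤ mass T P x := le_hasSum (hasSum_indicator_cone hP x) ⟨v, hv.1⟩ fun w _ ↦
        indicator_cone_nonneg hP x w

lemma mass_nil (hP : IsProbOn (bdry T) P) : mass T P [] = 1 := by
  have hcone : cone T [] = bdry T := by simp [cone]
  rw [mass, hcone, hP.2.tsum_eq]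

lemma mass_of_mem_bdry (hT : IsTree T) (hv : v ∈ bdry T) : mass T P v = P v := by
  have hcone : cone T v = {v} := by
    ext w
    refine ⟨fun hw ↦ (eq_of_prefix_of_mem_bdry hT hv hw.1.1 hw.2).symm, ?_⟩
    rintro rfl
    exact ⟨hv, List.prefix_refl w⟩
  rw [mass, hcone, tsum_singleton]

lemma hasSum_indicator_cone_succs (hT : IsTree T) (hx : x ∈ intr T) (hv : v ∈ bdry T) :
    HasSum (fun y : succs T x ↦ (cone T y).indicator P v) ((cone T x).indicator P v) := by
  by_cases hxv : x <+: v
  · have hlt := length_lt_of_mem_intr_of_prefix hx hv hxv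
    have hxtake : v.take x.length = x := (List.prefix_iff_eq_take.1 hxv).symm
    let z : succs T x :=
      ⟨v.take (x.length + 1), by simpa only [hxtake] using take_succ_mem_succs hT hv.1 hlt⟩
    have hz : (cone T z).indicator P v = (cone T x).indicator P v := by
      rw [Set.indicator_of_mem (s := cone T x) ⟨hv, hxv⟩,
        Set.indicator_of_mem (s := cone T z) ⟨hv, List.take_prefix _ _⟩]
    rw [← hz]
    refine hasSum_single z fun y hne ↦ Set.indicator_of_notMem (fun hyv ↦ hne (Subtype.ext ?_)) P
    simpa only [length_of_mem_succs y.2] using List.prefix_iff_eq_take.1 hyv.2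
  · rw [Set.indicator_of_notMem fun h ↦ hxv h.2]
    convert hasSum_zero with y
    exact Set.indicator_of_notMem (fun h ↦ hxv ((prefix_of_mem_succs y.2).trans h.2)) P

lemma hasSum_mass_succs (hT : IsTree T) (hP : IsProbOn (bdry T) P) (hx : x ∈ intr T) :
    HasSum (fun y : succs T x ↦ mass T P y) (mass T P x) :=
  hasSum_of_hasSum_swap (f := fun (v : bdry T) (y : succs T x) ↦ (cone T y).indicator P v)
    (fun v y ↦ indicator_cone_nonneg hP y v) (fun v ↦ hasSum_indicator_cone_succs hT hx v.2)
    (fun y ↦ hasSum_indicator_cone hP y) (hasSum_indicator_cone hP x)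

lemma fwd_pos (hT : IsTree T) (hL : LeafDense T) (hP : IsProbOn (bdry T) P)
    (hy : y ∈ succs T x) : 0 < fwd T P x y :=
  div_pos (mass_pos hL hP hy.1) (mass_pos hL hP (mem_intr_of_mem_succs hT hy).1)

lemma hasSum_fwd (hT : IsTree T) (hL : LeafDense T) (hP : IsProbOn (bdry T) P)
    (hx : x ∈ intr T) : HasSum (fun y : succs T x ↦ fwd T P x y) 1 := by
  have h := (hasSum_mass_succs hT hP hx).div_const (mass T P x)
  rwa [div_self (mass_pos hL hP hx.1).ne'] at h

lemma fwd_le_one (hT : IsTree T) (hL : LeafDense T) (hP : IsProbOn (bdry T) P)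
    (hy : y ∈ succs T x) : fwd T P x y ≤ 1 :=
  le_hasSum (hasSum_fwd hT hL hP (mem_intr_of_mem_succs hT hy)) ⟨y, hy⟩
    fun z _ ↦ (fwd_pos hT hL hP z.2).le

lemma mass_mul_fwd (hL : LeafDense T) (hP : IsProbOn (bdry T) P) (hx : x ∈ T) (y : List ℕ) :
    mass T P x * fwd T P x y = mass T P y :=
  mul_div_cancel₀ _ (mass_pos hL hP hx).ne'

end Mass

section PathSums

variable {T : Set (List ℕ)} {P Q : List ℕ → ℝ} {w w' : List ℕ → List ℕ → ℝ} {v : List ℕ} {r : ℝ}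

/-- The sum of the edge weights `w x y` along the geodesic from the root to `v`; the length
`|v|_ℓ` is the case where `w x y = ℓ x`. -/
def pathSum (w : List ℕ → List ℕ → ℝ) (v : List ℕ) : ℝ :=
  ∑ i ∈ Finset.range v.length, w (v.take i) (v.take (i + 1))

/-- The edges of `T`, encoded as pairs of an interior vertex and one of its successors. -/
abbrev Edge (T : Set (List ℕ)) : Type := Σ x : intr T, succs T x

lemma edge_ext {e e' : Edge T} (hfst : (e.1 : List ℕ) = e'.1) (hsnd : (e.2 : List ℕ) = e'.2) :
    e = e' := by
  obtain ⟨⟨x, hx⟩, ⟨y, hy⟩⟩ := e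
  obtain ⟨⟨x', hx'⟩, ⟨y', hy'⟩⟩ := e'
  obtain rfl : x = x' := hfst
  obtain rfl : y = y' := hsnd
  rfl

lemma pathSum_congr (hT : IsTree T) (hv : v ∈ T)
    (h : ∀ x, ∀ y ∈ succs T x, w x y = w' x y) : pathSum w v = pathSum w' v :=
  Finset.sum_congr rfl fun _ hi ↦
    h _ _ (take_succ_mem_succs hT hv (Finset.mem_range.1 hi))

lemma pathSum_sub (F : List ℕ → ℝ) (v : List ℕ) :
    pathSum (fun x y ↦ F y - F x) v = F v - F [] := by
  rw [pathSum, Finset.sum_range_sub fun i ↦ F (v.take i), List.take_length, List.take_zero]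

lemma lenWt_one (v : List ℕ) : lenWt (fun _ ↦ 1) v = v.length := by
  rw [lenWt, Finset.sum_const, Finset.card_range, nsmul_one]

lemma hasSum_edge_indicator_cone (hT : IsTree T) (hv : v ∈ bdry T) :
    HasSum (fun e : Edge T ↦ w e.1 e.2 * (cone T e.2).indicator P v) (pathSum w v * P v) := by
  let edge : Fin v.length → Edge T := fun i ↦
    ⟨⟨v.take i, take_mem_intr hT hv.1 i.2⟩, ⟨v.take (i + 1), take_succ_mem_succs hT hv.1 i.2⟩⟩
  have hinj : Function.Injective edge := fun i j hij ↦ by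
    have h := congrArg (fun e : Edge T ↦ (e.1 : List ℕ).length) hij
    simp only [edge, List.length_take, min_eq_left i.2.le, min_eq_left j.2.le] at h
    exact Fin.ext h
  have hoff : ∀ e ∉ Set.range edge, w e.1 e.2 * (cone T e.2).indicator P v = 0 := by
    rintro ⟨⟨x, hx⟩, ⟨y, hy⟩⟩ he
    refine mul_eq_zero_of_right _ (Set.indicator_of_notMem (fun hyv ↦ he ?_) P)
    have hxv : x <+: v := (prefix_of_mem_succs hy).trans hyv.2
    refine ⟨⟨x.length, length_lt_of_mem_intr_of_prefix hx hv hxv⟩, ?_⟩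
    refine edge_ext (List.prefix_iff_eq_take.1 hxv).symm ?_
    simpa only [length_of_mem_succs hy] using (List.prefix_iff_eq_take.1 hyv.2).symm
  have hon : ∀ i : Fin v.length, w (edge i).1 (edge i).2 * (cone T (edge i).2).indicator P v =
      w (v.take i) (v.take (i + 1)) * P v := fun i ↦ by
    rw [Set.indicator_of_mem (s := cone T (edge i).2) ⟨hv, List.take_prefix _ _⟩]
  rw [← hinj.hasSum_iff hoff, pathSum, Finset.sum_mul, Finset.sum_range]
  exact (hasSum_fintype _).congr_fun hon

theorem hasSum_pathSum_iff (hT : IsTree T) (hP : IsProbOn (bdry T) P)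
    (hw : ∀ x, ∀ y ∈ succs T x, 0 ≤ w x y) :
    HasSum (fun v : bdry T ↦ pathSum w v * P v) r ↔
      HasSum (fun e : Edge T ↦ mass T P e.2 * w e.1 e.2) r := by
  simp only [mul_comm (mass T P _)]
  exact hasSum_comm_of_nonneg
    (f := fun (v : bdry T) (e : Edge T) ↦ w e.1 e.2 * (cone T e.2).indicator P v)
    (fun v e ↦ mul_nonneg (hw _ _ e.2.2) (indicator_cone_nonneg hP _ v))
    (fun v ↦ hasSum_edge_indicator_cone hT v.2)
    (fun e ↦ (hasSum_indicator_cone hP e.2).mul_left _)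

theorem hasSum_pathSum_iff_of_hasSum_succs (hT : IsTree T) (hP : IsProbOn (bdry T) P)
    (hw : ∀ x, ∀ y ∈ succs T x, 0 ≤ w x y) {c : List ℕ → ℝ}
    (hc : ∀ x ∈ intr T, HasSum (fun y : succs T x ↦ mass T P y * w x y) (c x)) :
    HasSum (fun v : bdry T ↦ pathSum w v * P v) r ↔ HasSum (fun x : intr T ↦ c x) r := by
  have hnonneg : ∀ e : Edge T, 0 ≤ mass T P e.2 * w e.1 e.2 := fun e ↦
    mul_nonneg (mass_nonneg hP _) (hw _ _ e.2.2)
  rw [hasSum_pathSum_iff hT hP hw]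
  refine ⟨fun h ↦ h.sigma fun x ↦ hc x x.2, fun h ↦ h.sigma_of_hasSum (fun x ↦ hc x x.2) ?_⟩
  exact (summable_sigma_of_nonneg hnonneg).2
    ⟨fun x ↦ (hc x x.2).summable, h.summable.congr fun x ↦ (hc x x.2).tsum_eq.symm⟩

lemma summable_succs_of_hasSum_pathSum (hT : IsTree T) (hP : IsProbOn (bdry T) P)
    (hw : ∀ x, ∀ y ∈ succs T x, 0 ≤ w x y)
    (hr : HasSum (fun v : bdry T ↦ pathSum w v * P v) r) {x : List ℕ} (hx : x ∈ intr T) :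
    Summable fun y : succs T x ↦ mass T P y * w x y :=
  ((hasSum_pathSum_iff hT hP hw).1 hr).summable.sigma_factor ⟨x, hx⟩

lemma hasSum_tsum_succs_of_hasSum_pathSum (hT : IsTree T) (hP : IsProbOn (bdry T) P)
    (hw : ∀ x, ∀ y ∈ succs T x, 0 ≤ w x y)
    (hr : HasSum (fun v : bdry T ↦ pathSum w v * P v) r) :
    HasSum (fun x : intr T ↦ ∑' y : succs T x, mass T P y * w x y) r :=
  (hasSum_pathSum_iff_of_hasSum_succs (c := fun x ↦ ∑' y : succs T x, mass T P y * w x y) hT hP hw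
    fun _ hx ↦ (summable_succs_of_hasSum_pathSum hT hP hw hr hx).hasSum).1 hr

theorem hasSum_lenWt_iff (hT : IsTree T) (hP : IsProbOn (bdry T) P) {g : List ℕ → ℝ}
    (hg : ∀ x ∈ intr T, 0 ≤ g x) :
    HasSum (fun v : bdry T ↦ lenWt g v * P v) r ↔
      HasSum (fun x : intr T ↦ mass T P x * g x) r :=
  hasSum_pathSum_iff_of_hasSum_succs (w := fun x _ ↦ g x) (c := fun x ↦ mass T P x * g x) hT hP
    (fun x _ hy ↦ hg x (mem_intr_of_mem_succs hT hy))
    fun _ hx ↦ (hasSum_mass_succs hT hP hx).mul_right _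

lemma hasSum_mass (hT : IsTree T) (hP : IsProbOn (bdry T) P)
    (hN : Summable fun v : bdry T ↦ lenWt (fun _ ↦ 1) v * P v) :
    HasSum (fun x : intr T ↦ mass T P x) (expLen T (fun _ ↦ 1) P) := by
  simpa only [mul_one, expLen] using (hasSum_lenWt_iff hT hP fun _ _ ↦ zero_le_one).1 hN.hasSum

end PathSums

section ChainRules

open InformationTheory

variable {T : Set (List ℕ)} {P Q : List ℕ → ℝ} {x : List ℕ}

/-- The divergence of the transition probabilities of `P` at `x` from those of `Q`, in nats; the
summands `q klFun (p / q) = p log (p / q) + q - p` are nonnegative. -/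
def localDiv (T : Set (List ℕ)) (P Q : List ℕ → ℝ) (x : List ℕ) : ℝ :=
  ∑' y : succs T x, fwd T Q x y * klFun (fwd T P x y / fwd T Q x y)

theorem hasSum_mass_mul_Hloc (hT : IsTree T) (hL : LeafDense T) (hP : IsProbOn (bdry T) P)
    (hH : Summable fun v : bdry T ↦ phi (P v)) :
    HasSum (fun x : intr T ↦ mass T P x * Hloc T P x) (∑' v : bdry T, phi (P v)) := by
  have hw : ∀ x, ∀ y ∈ succs T x, 0 ≤ Real.logb 2 (1 / fwd T P x y) := fun x y hy ↦
    Real.logb_nonneg one_lt_two (one_le_one_div (fwd_pos hT hL hP hy) (fwd_le_one hT hL hP hy))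
  have htelescope : ∀ v ∈ bdry T,
      pathSum (fun x y ↦ Real.logb 2 (1 / fwd T P x y)) v = Real.logb 2 (1 / P v) := by
    intro v hv
    rw [pathSum_congr (w' := fun x y ↦
      Real.logb 2 (1 / mass T P y) - Real.logb 2 (1 / mass T P x)) hT hv.1, pathSum_sub,
      mass_nil hP, mass_of_mem_bdry hT hv, div_one, Real.logb_one, sub_zero]
    intro x y hy
    have hx' := (mass_pos hL hP (mem_intr_of_mem_succs hT hy).1).ne'
    have hy' := (mass_pos hL hP hy.1).ne'
    rw [fwd, one_div_div, Real.logb_div hx' hy', one_div, one_div, Real.logb_inv, Real.logb_inv,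
      neg_sub_neg]
  have hsum : HasSum (fun v : bdry T ↦ pathSum (fun x y ↦ Real.logb 2 (1 / fwd T P x y)) v * P v)
      (∑' v : bdry T, phi (P v)) := by
    refine hH.hasSum.congr_fun fun v ↦ ?_
    rw [htelescope v v.2, phi, mul_comm]
  refine (hasSum_tsum_succs_of_hasSum_pathSum hT hP hw hsum).congr_fun fun x ↦ ?_
  rw [Hloc, ← tsum_mul_left]
  refine tsum_congr fun y ↦ ?_
  rw [phi, ← mul_assoc, mass_mul_fwd hL hP x.2.1]

lemma pathSum_log_fwd_div_fwd (hT : IsTree T) (hL : LeafDense T) (hP : IsProbOn (bdry T) P)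
    (hQ : IsProbOn (bdry T) Q) {v : List ℕ} (hv : v ∈ bdry T) :
    pathSum (fun x y ↦ Real.log (fwd T P x y / fwd T Q x y)) v = Real.log (P v / Q v) := by
  rw [pathSum_congr (w' := fun x y ↦
    Real.log (mass T P y / mass T Q y) - Real.log (mass T P x / mass T Q x)) hT hv.1, pathSum_sub,
    mass_nil hP, mass_nil hQ, mass_of_mem_bdry hT hv, mass_of_mem_bdry hT hv, div_one,
    Real.log_one, sub_zero]
  intro x y hy
  have hx := (mem_intr_of_mem_succs hT hy).1
  have hPx := (mass_pos hL hP hx).ne'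
  have hPy := (mass_pos hL hP hy.1).ne'
  have hQx := (mass_pos hL hQ hx).ne'
  have hQy := (mass_pos hL hQ hy.1).ne'
  rw [← Real.log_div (div_ne_zero hPy hQy) (div_ne_zero hPx hQx), fwd, fwd,
    div_div_div_comm]

lemma hasSum_pathSum_fwd_div_fwd (hT : IsTree T) (hL : LeafDense T) (hP : IsProbOn (bdry T) P)
    (hQ : IsProbOn (bdry T) Q) (hN : Summable fun v : bdry T ↦ lenWt (fun _ ↦ 1) v * P v) :
    HasSum (fun v : bdry T ↦ pathSum (fun x y ↦ fwd T Q x y / fwd T P x y) v * P v)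
      (expLen T (fun _ ↦ 1) P) := by
  refine (hasSum_pathSum_iff_of_hasSum_succs (c := mass T P) hT hP
    (fun x y hy ↦ (div_pos (fwd_pos hT hL hQ hy) (fwd_pos hT hL hP hy)).le) ?_).2
    (hasSum_mass hT hP hN)
  intro x hx
  have h := (hasSum_fwd hT hL hQ hx).mul_left (mass T P x)
  rw [mul_one] at h
  refine h.congr_fun fun y ↦ ?_
  rw [← mass_mul_fwd hL hP hx.1, mul_assoc, mul_div_cancel₀ _ (fwd_pos hT hL hP y.2).ne']

lemma div_mul_klFun_div {p q : ℝ} (hp : 0 < p) (hq : 0 < q) :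
    q / p * klFun (p / q) = Real.log (p / q) + q / p - 1 := by
  rw [klFun]
  field_simp

lemma hasSum_pathSum_klFun (hT : IsTree T) (hL : LeafDense T) (hP : IsProbOn (bdry T) P)
    (hQ : IsProbOn (bdry T) Q) (hN : Summable fun v : bdry T ↦ lenWt (fun _ ↦ 1) v * P v)
    (hD : Summable fun v : bdry T ↦ P v * Real.logb 2 (P v / Q v)) :
    HasSum (fun v : bdry T ↦ pathSum (fun x y ↦
        fwd T Q x y / fwd T P x y * klFun (fwd T P x y / fwd T Q x y)) v * P v)
      (Real.log 2 * ∑' v : bdry T, P v * Real.logb 2 (P v / Q v)) := by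
  have h := ((hD.hasSum.mul_left (Real.log 2)).add
    (hasSum_pathSum_fwd_div_fwd hT hL hP hQ hN)).sub hN.hasSum
  rw [← expLen, add_sub_cancel_right] at h
  refine h.congr_fun fun v ↦ ?_
  have hsplit : pathSum (fun x y ↦
        fwd T Q x y / fwd T P x y * klFun (fwd T P x y / fwd T Q x y)) v =
      Real.log (P v / Q v) + pathSum (fun x y ↦ fwd T Q x y / fwd T P x y) v -
        lenWt (fun _ ↦ 1) v := by
    rw [pathSum_congr hT v.2.1 fun x y hy ↦
      div_mul_klFun_div (fwd_pos hT hL hP hy) (fwd_pos hT hL hQ hy),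
      ← pathSum_log_fwd_div_fwd hT hL hP hQ v.2]
    simp only [pathSum, lenWt, Finset.sum_sub_distrib, Finset.sum_add_distrib]
  rw [hsplit, Real.logb]
  field_simp [(Real.log_pos one_lt_two).ne']

lemma div_mul_klFun_fwd_nonneg (hT : IsTree T) (hL : LeafDense T) (hP : IsProbOn (bdry T) P)
    (hQ : IsProbOn (bdry T) Q) :
    ∀ x, ∀ y ∈ succs T x, 0 ≤ fwd T Q x y / fwd T P x y * klFun (fwd T P x y / fwd T Q x y) :=
  fun _ _ hy ↦
    have hp := fwd_pos hT hL hP hy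
    have hq := fwd_pos hT hL hQ hy
    mul_nonneg (div_pos hq hp).le (klFun_nonneg (div_pos hp hq).le)

lemma mass_mul_fwd_mul_klFun (hT : IsTree T) (hL : LeafDense T) (hP : IsProbOn (bdry T) P)
    {y : List ℕ} (hy : y ∈ succs T x) :
    mass T P x * (fwd T Q x y * klFun (fwd T P x y / fwd T Q x y)) =
      mass T P y * (fwd T Q x y / fwd T P x y * klFun (fwd T P x y / fwd T Q x y)) := by
  rw [← mass_mul_fwd hL hP (mem_intr_of_mem_succs hT hy).1 y, mul_assoc, ← mul_assoc (fwd T P x y),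
    mul_div_cancel₀ _ (fwd_pos hT hL hP hy).ne']

lemma hasSum_localDiv (hT : IsTree T) (hL : LeafDense T) (hP : IsProbOn (bdry T) P)
    (hQ : IsProbOn (bdry T) Q) (hN : Summable fun v : bdry T ↦ lenWt (fun _ ↦ 1) v * P v)
    (hD : Summable fun v : bdry T ↦ P v * Real.logb 2 (P v / Q v)) (hx : x ∈ intr T) :
    HasSum (fun y : succs T x ↦ fwd T Q x y * klFun (fwd T P x y / fwd T Q x y))
      (localDiv T P Q x) := by
  refine ((summable_mul_left_iff (mass_pos hL hP hx.1).ne').1 ?_).hasSum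
  exact (summable_succs_of_hasSum_pathSum hT hP (div_mul_klFun_fwd_nonneg hT hL hP hQ)
    (hasSum_pathSum_klFun hT hL hP hQ hN hD) hx).congr fun y ↦
      (mass_mul_fwd_mul_klFun hT hL hP y.2).symm

theorem hasSum_mass_mul_localDiv (hT : IsTree T) (hL : LeafDense T) (hP : IsProbOn (bdry T) P)
    (hQ : IsProbOn (bdry T) Q) (hN : Summable fun v : bdry T ↦ lenWt (fun _ ↦ 1) v * P v)
    (hD : Summable fun v : bdry T ↦ P v * Real.logb 2 (P v / Q v)) :
    HasSum (fun x : intr T ↦ mass T P x * localDiv T P Q x)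
      (Real.log 2 * ∑' v : bdry T, P v * Real.logb 2 (P v / Q v)) := by
  refine (hasSum_tsum_succs_of_hasSum_pathSum hT hP (div_mul_klFun_fwd_nonneg hT hL hP hQ)
    (hasSum_pathSum_klFun hT hL hP hQ hN hD)).congr_fun fun x ↦ ?_
  rw [localDiv, ← tsum_mul_left]
  exact tsum_congr fun y ↦ mass_mul_fwd_mul_klFun hT hL hP y.2

lemma localDiv_nonneg (hT : IsTree T) (hL : LeafDense T) (hP : IsProbOn (bdry T) P)
    (hQ : IsProbOn (bdry T) Q) (x : List ℕ) : 0 ≤ localDiv T P Q x :=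
  tsum_nonneg fun y ↦ mul_nonneg (fwd_pos hT hL hQ y.2).le
    (klFun_nonneg (div_pos (fwd_pos hT hL hP y.2) (fwd_pos hT hL hQ y.2)).le)

end ChainRules

section CrossSection

variable {T S : Set (List ℕ)} {ℓ P : List ℕ → ℝ} {x s v : List ℕ}

lemma mem_intr_subTreeOf_iff : x ∈ intr (subTreeOf S) ↔ ∃ s ∈ S, x <+: s ∧ x ≠ s := by
  constructor
  · rintro ⟨hx, hleaf⟩
    obtain ⟨y, hy⟩ : (succs (subTreeOf S) x).Nonempty :=
      Set.nonempty_iff_ne_empty.2 fun h ↦ hleaf ⟨hx, h⟩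
    obtain ⟨s, hs, hys⟩ := hy.1
    refine ⟨s, hs, (prefix_of_mem_succs hy).trans hys, ?_⟩
    rintro rfl
    have := hys.length_le
    have := length_of_mem_succs hy
    omega
  · rintro ⟨_, hs, ⟨t, rfl⟩, hne⟩
    obtain ⟨n, t, rfl⟩ := List.exists_cons_of_ne_nil
      (show t ≠ [] by rintro rfl; exact hne (List.append_nil x).symm)
    refine ⟨⟨_, hs, List.prefix_append _ _⟩, fun hleaf ↦ ?_⟩
    have hy : x ++ [n] ∈ succs (subTreeOf S) x :=
      ⟨⟨_, hs, t, by rw [List.append_assoc, List.singleton_append]⟩, n, rfl⟩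
    exact Set.notMem_empty _ (hleaf.2 ▸ hy)

lemma eq_of_prefix_of_crossSection (hL : LeafDense T) (hST : S ⊆ T)
    (hS : ∀ v ∈ bdry T, ∃! s : List ℕ, s ∈ S ∧ s <+: v) {t : List ℕ} (hs : s ∈ S) (ht : t ∈ S)
    (hst : s <+: t) : s = t := by
  obtain ⟨v, hv, htv⟩ := hL t (hST ht)
  exact (hS v hv).unique ⟨hs, hst.trans htv⟩ ⟨ht, htv⟩

lemma take_mem_intr_subTreeOf_iff (hL : LeafDense T) (hST : S ⊆ T)
    (hS : ∀ v ∈ bdry T, ∃! s : List ℕ, s ∈ S ∧ s <+: v) (hs : s ∈ S) (hsv : s <+: v)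
    {i : ℕ} (hi : i ≤ v.length) : v.take i ∈ intr (subTreeOf S) ↔ i < s.length := by
  have hlen : (v.take i).length = i := by rw [List.length_take, min_eq_left hi]
  rw [mem_intr_subTreeOf_iff]
  constructor
  · rintro ⟨t, ht, hit, hne⟩
    by_contra! hsi
    have hsi' : s <+: v.take i :=
      List.prefix_of_prefix_length_le hsv (List.take_prefix i v) (hsi.trans hlen.ge)
    obtain rfl := eq_of_prefix_of_crossSection hL hST hS hs ht (hsi'.trans hit)
    exact hne (hit.eq_of_length_le hsi'.length_le)
  · intro his
    refine ⟨s, hs, List.prefix_of_prefix_length_le (List.take_prefix i v) hsv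
      (hlen.trans_le his.le), fun h ↦ ?_⟩
    rw [← h, hlen] at his
    exact his.false

lemma lenWt_indicator_intr_subTreeOf (hL : LeafDense T) (hST : S ⊆ T)
    (hS : ∀ v ∈ bdry T, ∃! s : List ℕ, s ∈ S ∧ s <+: v) (hs : s ∈ S) (hsv : s <+: v) :
    lenWt ((intr (subTreeOf S)).indicator ℓ) v = lenWt ℓ s := by
  have hmem : ∀ i ∈ Finset.range v.length, v.take i ∈ intr (subTreeOf S) ↔ i < s.length :=
    fun i hi ↦ take_mem_intr_subTreeOf_iff hL hST hS hs hsv (Finset.mem_range.1 hi).le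
  have hsub : Finset.range s.length ⊆ Finset.range v.length :=
    Finset.range_subset_range.2 hsv.length_le
  calc lenWt ((intr (subTreeOf S)).indicator ℓ) v
      = ∑ i ∈ Finset.range s.length, (intr (subTreeOf S)).indicator ℓ (v.take i) :=
        (Finset.sum_subset hsub fun i hi his ↦ Set.indicator_of_notMem
          (fun h ↦ his (Finset.mem_range.2 ((hmem i hi).1 h))) ℓ).symm
    _ = ∑ i ∈ Finset.range s.length, ℓ (s.take i) := Finset.sum_congr rfl fun i hi ↦ by
        have his := Finset.mem_range.1 hi
        rw [Set.indicator_of_mem ((hmem i (hsub hi)).2 his), List.prefix_iff_eq_take.1 hsv,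
          List.take_take, min_eq_left his.le]

lemma lenWt_nonneg (hT : IsTree T) (hℓ : ∀ x ∈ intr T, 0 ≤ ℓ x) (hx : x ∈ T) : 0 ≤ lenWt ℓ x :=
  Finset.sum_nonneg fun _ hi ↦ hℓ _ (take_mem_intr hT hx (Finset.mem_range.1 hi))

theorem hasSum_mass_mul_indicator_intr_subTreeOf (hT : IsTree T) (hL : LeafDense T)
    (hP : IsProbOn (bdry T) P) (hℓ : ∀ x ∈ intr T, 0 ≤ ℓ x)
    (hlen : Summable fun v : bdry T ↦ lenWt ℓ v * P v) (hST : S ⊆ T)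
    (hS : ∀ v ∈ bdry T, ∃! s : List ℕ, s ∈ S ∧ s <+: v) :
    HasSum (fun x : intr T ↦ mass T P x * (intr (subTreeOf S)).indicator ℓ x)
      (∑' s : S, lenWt ℓ s * mass T P s) := by
  have hind : ∀ x ∈ intr T, 0 ≤ (intr (subTreeOf S)).indicator ℓ x := fun x hx ↦
    Set.indicator_apply_nonneg fun _ ↦ hℓ x hx
  have hvertex : Summable fun x : intr T ↦ mass T P x * (intr (subTreeOf S)).indicator ℓ x :=
    Summable.of_nonneg_of_le (fun x ↦ mul_nonneg (mass_nonneg hP _) (hind x x.2))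
      (fun x ↦ mul_le_mul_of_nonneg_left (Set.indicator_le_self' (fun _ _ ↦ hℓ x x.2) _)
        (mass_nonneg hP _))
      ((hasSum_lenWt_iff hT hP hℓ).1 hlen.hasSum).summable
  have hrow : ∀ v : bdry T, HasSum (fun s : S ↦ lenWt ℓ s * (cone T s).indicator P v)
      (lenWt ((intr (subTreeOf S)).indicator ℓ) v * P v) := by
    intro v
    obtain ⟨s, ⟨hs, hsv⟩, huniq⟩ := hS v v.2
    have hval : lenWt ℓ s * (cone T s).indicator P v =
        lenWt ((intr (subTreeOf S)).indicator ℓ) v * P v := by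
      rw [lenWt_indicator_intr_subTreeOf hL hST hS hs hsv,
        Set.indicator_of_mem (show (v : List ℕ) ∈ cone T s from ⟨v.2, hsv⟩)]
    rw [← hval]
    refine hasSum_single (⟨s, hs⟩ : S) fun t hne ↦ ?_
    rw [Set.indicator_of_notMem fun h ↦ hne (Subtype.ext (huniq t ⟨t.2, h.2⟩)), mul_zero]
  have hcol := hasSum_of_hasSum_swap
    (fun (v : bdry T) (s : S) ↦ mul_nonneg (lenWt_nonneg hT hℓ (hST s.2))
      (indicator_cone_nonneg hP s v)) hrow
    (fun s ↦ (hasSum_indicator_cone hP (s : List ℕ)).mul_left (lenWt ℓ s))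
    ((hasSum_lenWt_iff hT hP hind).2 hvertex.hasSum)
  rw [hcol.tsum_eq]
  exact hvertex.hasSum

end CrossSection

section NodeAverage

variable {T S : Set (List ℕ)} {ℓ P g : List ℕ → ℝ} {X : ℝ}

lemma expLen_pos (hT : IsTree T) (hL : LeafDense T) (hroot : [] ∈ intr T)
    (hP : IsProbOn (bdry T) P) (hℓ : ∀ x ∈ intr T, 0 < ℓ x)
    (hlen : Summable fun v : bdry T ↦ lenWt ℓ v * P v) : 0 < expLen T ℓ P := by
  have hterm : ∀ x ∈ intr T, 0 < mass T P x * ℓ x := fun x hx ↦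
    mul_pos (mass_pos hL hP hx.1) (hℓ x hx)
  exact (hterm [] hroot).trans_le (le_hasSum
    ((hasSum_lenWt_iff hT hP fun x hx ↦ (hℓ x hx).le).1 hlen.hasSum) ⟨[], hroot⟩
    fun x _ ↦ (hterm x x.2).le)

lemma nodeAvg_nonneg (hT : IsTree T) (hP : IsProbOn (bdry T) P) (hℓ : ∀ x ∈ intr T, 0 < ℓ x)
    {x : List ℕ} (hx : x ∈ intr T) : 0 ≤ nodeAvg T ℓ P x :=
  div_nonneg (mul_nonneg (hℓ x hx).le (mass_nonneg hP x)) (tsum_nonneg fun v ↦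
    mul_nonneg (lenWt_nonneg hT (fun y hy ↦ (hℓ y hy).le) v.2.1) (hP.1 v v.2).le)

lemma hasSum_nodeAvg (hT : IsTree T) (hL : LeafDense T) (hroot : [] ∈ intr T)
    (hP : IsProbOn (bdry T) P) (hℓ : ∀ x ∈ intr T, 0 < ℓ x)
    (hlen : Summable fun v : bdry T ↦ lenWt ℓ v * P v) :
    HasSum (fun x : intr T ↦ nodeAvg T ℓ P x) 1 := by
  have h := ((hasSum_lenWt_iff hT hP fun x hx ↦ (hℓ x hx).le).1 hlen.hasSum).div_const
    (expLen T ℓ P)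
  rw [← expLen, div_self (expLen_pos hT hL hroot hP hℓ hlen).ne'] at h
  exact h.congr_fun fun x ↦ by rw [nodeAvg, mul_comm (ℓ x)]

lemma hasSum_nodeAvg_mul_div (hℓ : ∀ x ∈ intr T, 0 < ℓ x)
    (hX : HasSum (fun x : intr T ↦ mass T P x * g x) X) :
    HasSum (fun x : intr T ↦ nodeAvg T ℓ P x * (g x / ℓ x)) (X / expLen T ℓ P) := by
  refine (hX.div_const _).congr_fun fun x ↦ ?_
  have := (hℓ x x.2).ne'
  rw [nodeAvg]
  field_simp

lemma hasSum_indicator_nodeAvg (hT : IsTree T) (hL : LeafDense T) (hP : IsProbOn (bdry T) P)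
    (hℓ : ∀ x ∈ intr T, 0 < ℓ x) (hlen : Summable fun v : bdry T ↦ lenWt ℓ v * P v)
    (hST : S ⊆ T) (hS : ∀ v ∈ bdry T, ∃! s : List ℕ, s ∈ S ∧ s <+: v) :
    HasSum ({x : intr T | ↑x ∈ intr (subTreeOf S)}.indicator fun x ↦ nodeAvg T ℓ P x)
      ((∑' s : S, lenWt ℓ s * mass T P s) / expLen T ℓ P) := by
  refine ((hasSum_mass_mul_indicator_intr_subTreeOf hT hL hP (fun x hx ↦ (hℓ x hx).le) hlen hST
    hS).div_const _).congr_fun fun x ↦ ?_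
  by_cases hx : (x : List ℕ) ∈ intr (subTreeOf S)
  · rw [Set.indicator_of_mem (by exact hx), Set.indicator_of_mem hx, nodeAvg, mul_comm (ℓ x)]
  · rw [Set.indicator_of_notMem (by exact hx), Set.indicator_of_notMem hx, mul_zero, zero_div]

end NodeAverage

section Comparison

variable {T S : Set (List ℕ)} {ℓ P Q : List ℕ → ℝ} {ε δ : ℝ} {M : ℕ}

/-- Uniform summability of the local entropy series of `P` and `Q` at level `ε` with witness `M`:
at each interior vertex, at most `M` successors can be removed so that both remaining series are
below `ε`. -/
def UniformEntropyTail (T : Set (List ℕ)) (P Q : List ℕ → ℝ) (ε : ℝ) (M : ℕ) : Prop :=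
  ∀ x ∈ intr T, ∃ F : Finset (List ℕ), ↑F ⊆ succs T x ∧ F.card ≤ M ∧
    (Summable fun y : {y : List ℕ // y ∈ succs T x ∧ y ∉ F} => phi (fwd T P x y)) ∧
    (∑' y : {y : List ℕ // y ∈ succs T x ∧ y ∉ F}, phi (fwd T P x y)) < ε ∧
    (Summable fun y : {y : List ℕ // y ∈ succs T x ∧ y ∉ F} => phi (fwd T Q x y)) ∧
    (∑' y : {y : List ℕ // y ∈ succs T x ∧ y ∉ F}, phi (fwd T Q x y)) < ε

theorem exists_abs_entropy_sub_le (hT : IsTree T) (hL : LeafDense T)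
    (hP : IsProbOn (bdry T) P) (hQ : IsProbOn (bdry T) Q)
    (hN : Summable fun v : bdry T ↦ lenWt (fun _ ↦ 1) v * P v)
    (hHP : Summable fun v : bdry T ↦ phi (P v))
    (hD : Summable fun v : bdry T ↦ P v * Real.logb 2 (P v / Q v))
    (hM : UniformEntropyTail T P Q ε M) (hδ₀ : 0 < δ) (hδ : δ ≤ 1 / 2) :
    ∃ X, HasSum (fun x : intr T ↦ mass T P x * Hloc T Q x) X ∧
      |∑' v : bdry T, phi (P v) - X| ≤
        (2 * ε + M * phi δ) * expLen T (fun _ ↦ 1) P +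
          2 / (Real.exp 1 * Real.log 2 * δ) * √2 * √(expLen T (fun _ ↦ 1) P *
            (Real.log 2 * ∑' v : bdry T, P v * Real.logb 2 (P v / Q v))) := by
  have hlocal : ∀ x : intr T, |Hloc T P x - Hloc T Q x| ≤
      2 * ε + M * phi δ + 2 / (Real.exp 1 * Real.log 2 * δ) * √2 * √(localDiv T P Q x) := by
    intro x
    obtain ⟨F, hF, hFM, hpF, hpε, hqF, hqε⟩ := hM x x.2
    exact abs_tsum_phi_sub_le hF hFM (fun y ↦ fwd_pos hT hL hP) (fun y ↦ fwd_pos hT hL hQ)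
      (hasSum_fwd hT hL hP x.2) (hasSum_fwd hT hL hQ x.2)
      (hasSum_localDiv hT hL hP hQ hN hD x.2) hpF hpε.le hqF hqε.le hδ₀ hδ
  have hlengths : HasSum (fun x : intr T ↦ mass T P x) (expLen T (fun _ ↦ 1) P) :=
    hasSum_mass hT hP hN
  obtain ⟨s, hs, hsum⟩ := exists_hasSum_mul_abs_le (fun x : intr T ↦ mass_nonneg hP x)
    (fun x ↦ localDiv_nonneg hT hL hP hQ x) hlengths (hasSum_mass_mul_localDiv hT hL hP hQ hN hD)
    (by positivity) hlocal
  refine ⟨∑' v : bdry T, phi (P v) - s, ?_, by rwa [sub_sub_cancel]⟩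
  exact ((hasSum_mass_mul_Hloc hT hL hP hHP).sub hsum).congr_fun fun x ↦ by ring

lemma sqrt_mul_log_mul_div_eq {N L : ℝ} (D : ℝ) (hN : 0 ≤ N) (hL : 0 < L) :
    2 / (Real.exp 1 * Real.log 2 * δ) * √2 * √(N * (Real.log 2 * D)) / L =
      2 * √2 / (Real.exp 1 * √(Real.log 2)) * √(N / L) / δ * √(D / L) := by
  have hlog : 0 < Real.log 2 := Real.log_pos one_lt_two
  rw [Real.sqrt_mul hN, Real.sqrt_mul hlog.le, Real.sqrt_div' _ hL.le, Real.sqrt_div' _ hL.le]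
  field_simp
  rw [Real.sq_sqrt hlog.le, Real.sq_sqrt hL.le]
  ring

theorem exists_abs_entropy_div_expLen_sub_le (hT : IsTree T) (hL : LeafDense T)
    (hroot : [] ∈ intr T) (hℓ : ∀ x ∈ intr T, 0 < ℓ x) (hP : IsProbOn (bdry T) P)
    (hQ : IsProbOn (bdry T) Q) (hlenP : Summable fun v : bdry T ↦ lenWt ℓ v * P v)
    (hN : Summable fun v : bdry T ↦ lenWt (fun _ ↦ 1) v * P v)
    (hHP : Summable fun v : bdry T ↦ phi (P v))
    (hD : Summable fun v : bdry T ↦ P v * Real.logb 2 (P v / Q v))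
    (hM : UniformEntropyTail T P Q ε M) (hδ₀ : 0 < δ) (hδ : δ ≤ 1 / 2) :
    ∃ X, HasSum (fun x : intr T ↦ mass T P x * Hloc T Q x) X ∧
      |(∑' v : bdry T, phi (P v)) / expLen T ℓ P - X / expLen T ℓ P| ≤
        (expLen T (fun _ ↦ 1) P / expLen T ℓ P) * (2 * ε + M * phi δ)
        + (2 * √2 / (Real.exp 1 * √(Real.log 2))) * √(expLen T (fun _ ↦ 1) P / expLen T ℓ P) / δ
            * √((∑' v : bdry T, P v * Real.logb 2 (P v / Q v)) / expLen T ℓ P) := by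
  have hLP := expLen_pos hT hL hroot hP hℓ hlenP
  have hN₀ : 0 ≤ expLen T (fun _ ↦ 1) P := (hasSum_mass hT hP hN).nonneg fun x : intr T ↦
    mass_nonneg hP x
  obtain ⟨X, hX, hle⟩ := exists_abs_entropy_sub_le hT hL hP hQ hN hHP hD hM hδ₀ hδ
  refine ⟨X, hX, ?_⟩
  rw [← sub_div, abs_div, abs_of_pos hLP, ← sqrt_mul_log_mul_div_eq _ hN₀ hLP]
  exact (div_le_div_of_nonneg_right hle hLP.le).trans_eq (by ring)

theorem abs_div_expLen_sub_le (hT : IsTree T) (hL : LeafDense T) (hroot : [] ∈ intr T)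
    (hℓ : ∀ x ∈ intr T, 0 < ℓ x) (hP : IsProbOn (bdry T) P) (hQ : IsProbOn (bdry T) Q)
    (hlenP : Summable fun v : bdry T ↦ lenWt ℓ v * P v)
    (hlenQ : Summable fun v : bdry T ↦ lenWt ℓ v * Q v)
    (hST : S ⊆ T) (hS : ∀ v ∈ bdry T, ∃! s : List ℕ, s ∈ S ∧ s <+: v)
    {g : List ℕ → ℝ} {A a Astar astar X Y : ℝ}
    (hA : IsLUB {r : ℝ | ∃ x ∈ intr T, r = g x / ℓ x} A)
    (ha : IsGLB {r : ℝ | ∃ x ∈ intr T, r = g x / ℓ x} a)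
    (hAstar : IsLUB {r : ℝ | ∃ x ∈ intr T \ intr (subTreeOf S), r = g x / ℓ x} Astar)
    (hastar : IsGLB {r : ℝ | ∃ x ∈ intr T \ intr (subTreeOf S), r = g x / ℓ x} astar)
    (hX : HasSum (fun x : intr T ↦ mass T P x * g x) X)
    (hY : HasSum (fun x : intr T ↦ mass T Q x * g x) Y) :
    |X / expLen T ℓ P - Y / expLen T ℓ Q| ≤
      (Astar - astar) / 2 * ∑' x : intr T, |nodeAvg T ℓ P x - nodeAvg T ℓ Q x|
        + (A - a) * max ((∑' s : S, lenWt ℓ s * mass T P s) / expLen T ℓ P)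
                        ((∑' s : S, lenWt ℓ s * mass T Q s) / expLen T ℓ Q) := by
  have hsub : {r : ℝ | ∃ x ∈ intr T \ intr (subTreeOf S), r = g x / ℓ x} ⊆
      {r : ℝ | ∃ x ∈ intr T, r = g x / ℓ x} := fun _ ⟨x, hx, hr⟩ ↦ ⟨x, hx.1, hr⟩
  exact abs_hasSum_mul_sub_le_half_oscillation
    (fun x ↦ nodeAvg_nonneg hT hP hℓ x.2) (fun x ↦ nodeAvg_nonneg hT hQ hℓ x.2)
    (hasSum_nodeAvg hT hL hroot hP hℓ hlenP) (hasSum_nodeAvg hT hL hroot hQ hℓ hlenQ)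
    (hasSum_indicator_nodeAvg hT hL hP hℓ hlenP hST hS)
    (hasSum_indicator_nodeAvg hT hL hQ hℓ hlenQ hST hS)
    (hasSum_nodeAvg_mul_div hℓ hX) (hasSum_nodeAvg_mul_div hℓ hY)
    (fun x ↦ ⟨ha.1 ⟨x, x.2, rfl⟩, hA.1 ⟨x, x.2, rfl⟩⟩)
    (fun x hx ↦ ⟨hastar.1 ⟨x, ⟨x.2, hx⟩, rfl⟩, hAstar.1 ⟨x, ⟨x.2, hx⟩, rfl⟩⟩)
    (hastar.mono ha hsub) (isGLB_le_isLUB hastar hAstar hAstar.nonempty) (hAstar.mono hA hsub)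

theorem cross_section_comparison_general
    (T : Set (List ℕ)) (hT : IsTree T) (hL : LeafDense T) (hroot : ([] : List ℕ) ∈ intr T)
    (ℓ : List ℕ → ℝ) (hℓ : ∀ x ∈ intr T, 0 < ℓ x)
    (P Q : List ℕ → ℝ) (hP : IsProbOn (bdry T) P) (hQ : IsProbOn (bdry T) Q)
    (hlenP : Summable fun v : bdry T ↦ lenWt ℓ v * P v)
    (hlenQ : Summable fun v : bdry T ↦ lenWt ℓ v * Q v)
    (hlenSharpP : Summable fun v : bdry T ↦ ((v : List ℕ).length : ℝ) * P v)
    (hHP : Summable fun v : bdry T ↦ phi (P v)) (hHQ : Summable fun v : bdry T ↦ phi (Q v))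
    (hD : Summable fun v : bdry T ↦ P v * Real.logb 2 (P v / Q v))
    (S : Set (List ℕ)) (hST : S ⊆ T) (hS : ∀ v ∈ bdry T, ∃! s : List ℕ, s ∈ S ∧ s <+: v)
    (A a Astar astar : ℝ)
    (hA : IsLUB {r : ℝ | ∃ x ∈ intr T, r = Hloc T Q x / ℓ x} A)
    (ha : IsGLB {r : ℝ | ∃ x ∈ intr T, r = Hloc T Q x / ℓ x} a)
    (hAstar : IsLUB {r : ℝ | ∃ x ∈ intr T \ intr (subTreeOf S), r = Hloc T Q x / ℓ x} Astar)
    (hastar : IsGLB {r : ℝ | ∃ x ∈ intr T \ intr (subTreeOf S), r = Hloc T Q x / ℓ x} astar)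
    (ε : ℝ) (M : ℕ) (hM : UniformEntropyTail T P Q ε M) (δ : ℝ) (hδ₀ : 0 < δ) (hδ : δ ≤ 1 / 2) :
    |(∑' v : bdry T, phi (P v)) / expLen T ℓ P - (∑' v : bdry T, phi (Q v)) / expLen T ℓ Q|
      ≤ (expLen T (fun _ ↦ 1) P / expLen T ℓ P) * (2 * ε + M * phi δ)
        + (2 * √2 / (Real.exp 1 * √(Real.log 2))) * √(expLen T (fun _ ↦ 1) P / expLen T ℓ P) / δ
            * √((∑' v : bdry T, P v * Real.logb 2 (P v / Q v)) / expLen T ℓ P)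
        + (Astar - astar) / 2 * ∑' x : intr T, |nodeAvg T ℓ P x - nodeAvg T ℓ Q x|
        + (A - a) * max ((∑' s : S, lenWt ℓ s * mass T P s) / expLen T ℓ P)
                        ((∑' s : S, lenWt ℓ s * mass T Q s) / expLen T ℓ Q) := by
  have hN : Summable fun v : bdry T ↦ lenWt (fun _ ↦ 1) v * P v := by
    simpa only [lenWt_one] using hlenSharpP
  obtain ⟨X, hX, hentropy⟩ := exists_abs_entropy_div_expLen_sub_le hT hL hroot hℓ hP hQ hlenP hN
    hHP hD hM hδ₀ hδ
  have haverage := abs_div_expLen_sub_le hT hL hroot hℓ hP hQ hlenP hlenQ hST hS hA ha hAstar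
    hastar hX (hasSum_mass_mul_Hloc hT hL hQ hHQ)
  linarith [abs_sub_le ((∑' v : bdry T, phi (P v)) / expLen T ℓ P) (X / expLen T ℓ P)
    ((∑' v : bdry T, phi (Q v)) / expLen T ℓ Q)]

end Comparison

/-- Cross-section variant of the main comparison theorem (Lemma `variant`):
the term `((A−a)/2)·‖μ_P − μ_Q‖₁` can be replaced by
`((A*_S − a*_S)/2)·‖μ_P − μ_Q‖₁ + (A − a)·max{ℓ(P_S)/ℓ(P), ℓ(Q_S)/ℓ(Q)}`. -/
theorem cross_section_comparison
    (T : Set (List ℕ)) (hT : IsTree T) (hU : NoUnary T) (hG : NoInfGeo T)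
    (hB : (bdry T).Nonempty) (hroot : ([] : List ℕ) ∈ intr T)
    (ℓ : List ℕ → ℝ) (hℓ : ∀ x ∈ intr T, 0 < ℓ x)
    (P Q : List ℕ → ℝ) (hP : IsProbOn (bdry T) P) (hQ : IsProbOn (bdry T) Q)
    (hlenP : Summable fun v : bdry T => lenWt ℓ v * P v)
    (hlenQ : Summable fun v : bdry T => lenWt ℓ v * Q v)
    (hlenSharpP : Summable fun v : bdry T => ((v : List ℕ).length : ℝ) * P v)
    (hHP : Summable fun v : bdry T => phi (P v))
    (hHQ : Summable fun v : bdry T => phi (Q v))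
    (hD : Summable fun v : bdry T => |P v * Real.logb 2 (P v / Q v)|)
    (S : Set (List ℕ)) (hST : S ⊆ T)
    (hS : ∀ v ∈ bdry T, ∃! s : List ℕ, s ∈ S ∧ s <+: v)
    (A a Astar astar : ℝ)
    (hA : IsLUB {r : ℝ | ∃ x ∈ intr T, r = Hloc T Q x / ℓ x} A)
    (ha : IsGLB {r : ℝ | ∃ x ∈ intr T, r = Hloc T Q x / ℓ x} a)
    (hAstar : IsLUB {r : ℝ | ∃ x ∈ intr T \ intr (subTreeOf S), r = Hloc T Q x / ℓ x} Astar)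
    (hastar : IsGLB {r : ℝ | ∃ x ∈ intr T \ intr (subTreeOf S), r = Hloc T Q x / ℓ x} astar)
    (ε : ℝ) (hε : 0 < ε) (M : ℕ)
    (hM : ∀ x ∈ intr T, ∃ F : Finset (List ℕ), ↑F ⊆ succs T x ∧ F.card ≤ M ∧
      (Summable fun y : {y : List ℕ // y ∈ succs T x ∧ y ∉ F} => phi (fwd T P x y)) ∧
      (∑' y : {y : List ℕ // y ∈ succs T x ∧ y ∉ F}, phi (fwd T P x y)) < ε ∧
      (Summable fun y : {y : List ℕ // y ∈ succs T x ∧ y ∉ F} => phi (fwd T Q x y)) ∧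
      (∑' y : {y : List ℕ // y ∈ succs T x ∧ y ∉ F}, phi (fwd T Q x y)) < ε)
    (δ : ℝ) (hδ0 : 0 < δ) (hδ : δ < 1/2) :
    |(∑' v : bdry T, phi (P v)) / expLen T ℓ P
        - (∑' v : bdry T, phi (Q v)) / expLen T ℓ Q|
      ≤ (expLen T (fun _ => 1) P / expLen T ℓ P) * (2 * ε + M * phi δ)
        + (2 * Real.sqrt 2 / (Real.exp 1 * Real.sqrt (Real.log 2)))
            * Real.sqrt (expLen T (fun _ => 1) P / expLen T ℓ P) / δ
            * Real.sqrt ((∑' v : bdry T, P v * Real.logb 2 (P v / Q v)) / expLen T ℓ P)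
        + (Astar - astar) / 2 * ∑' x : intr T, |nodeAvg T ℓ P x - nodeAvg T ℓ Q x|
        + (A - a) * max ((∑' s : S, lenWt ℓ s * mass T P s) / expLen T ℓ P)
                        ((∑' s : S, lenWt ℓ s * mass T Q s) / expLen T ℓ Q) :=
  cross_section_comparison_general T hT (hG.leafDense hT) hroot ℓ hℓ P Q hP hQ hlenP hlenQ
    hlenSharpP hHP hHQ hD.of_abs S hST hS A a Astar astar hA ha hAstar hastar ε M hM δ hδ0 hδ.le
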